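/- Let f : B → A be a homomorphism of commutative rings and M an A-module. The assignments ρ ↦ g with g(a ⊗ m) = Σ m_0·a ⊗ m_1 (where ρ(m) = Σ m_0 ⊗ m_1), and g ↦ ρ with ρ(m) = g(1 ⊗ m), are mutually inverse bijections between: (i) the set of A-linear maps ρ : M → M ⊗_B A satisfying coassociativity Σ ρ(m_0) ⊗ m_1 = Σ m_0 ⊗ 1 ⊗ m_1 and the counit condition Σ m_0·m_1 = m; and (ii) the set of descent data on M, i.e. A ⊗_B A-module maps g : A ⊗_B M → M ⊗_B A satisfying g_2 = g_3 ∘ g_1 as maps A ⊗_B A ⊗_B M → A ⊗_B M ⊗_B A and μ_M(g(1 ⊗ m)) = m for all m ∈ M. -/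

import Mathlib

open TensorProduct

universe u

noncomputable def unitMap (B A : Type u) [CommRing B] [CommRing A] [Algebra B A]
    (N : Type u) [AddCommGroup N] [Module B N] : N →ₗ[B] N ⊗[B] A :=
  (TensorProduct.mk B N A).flip 1

/-- The action map `M ⊗_B A → M`, `m ⊗ a ↦ m · a`. -/
noncomputable def actionMap (B A : Type u) [CommRing B] [CommRing A] [Algebra B A]
    (M : Type u) [AddCommGroup M] [Module B M] [Module A M] [IsScalarTower B A M] :
    M ⊗[B] A →ₗ[B] M :=
  TensorProduct.lift (LinearMap.mk₂ B (fun m a => a • m)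
    (fun m m' a => smul_add a m m')
    (fun b m a => smul_comm a b m)
    (fun m a a' => add_smul a a' m)
    (fun b m a => smul_assoc b a m))

/-- `(M, ρ)` is a comodule over the canonical coring `A ⊗_B A`. -/
def IsCanComodule (B A : Type u) [CommRing B] [CommRing A] [Algebra B A]
    (M : Type u) [AddCommGroup M] [Module B M] [Module A M] [IsScalarTower B A M]
    (ρ : M →ₗ[B] M ⊗[B] A) : Prop :=
  (∀ (a : A) (m : M),
      ρ (a • m) = LinearMap.lTensor M (LinearMap.mulLeft B a) (ρ m)) ∧
  (∀ m : M, LinearMap.rTensor A ρ (ρ m) = LinearMap.rTensor A (unitMap B A M) (ρ m)) ∧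
  (∀ m : M, actionMap B A M (ρ m) = m)

/-- The coinvariants `M^co = {m : ρ m = m ⊗ 1}` as a `B`-submodule. -/
noncomputable def coinv (B A : Type u) [CommRing B] [CommRing A] [Algebra B A]
    (M : Type u) [AddCommGroup M] [Module B M] [Module A M] [IsScalarTower B A M]
    (ρ : M →ₗ[B] M ⊗[B] A) : Submodule B M where
  carrier := {m | ρ m = m ⊗ₜ[B] 1}
  add_mem' := by
    intro x y hx hy
    simp only [Set.mem_setOf_eq] at *
    rw [map_add, hx, hy, add_tmul]
  zero_mem' := by simp
  smul_mem' := by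
    intro b m hm
    simp only [Set.mem_setOf_eq] at *
    rw [map_smul, hm, smul_tmul']

/-- The counit map `ζ_M : M^co ⊗_B A → M`, `m ⊗ a ↦ m · a`. -/
noncomputable def counitMap (B A : Type u) [CommRing B] [CommRing A] [Algebra B A]
    (M : Type u) [AddCommGroup M] [Module B M] [Module A M] [IsScalarTower B A M]
    (ρ : M →ₗ[B] M ⊗[B] A) : (coinv B A M ρ) ⊗[B] A →ₗ[B] M :=
  actionMap B A M ∘ₗ LinearMap.rTensor A (coinv B A M ρ).subtype

section DescentData

variable (B A : Type u) [CommRing B] [CommRing A] [Algebra B A]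
variable (M : Type u) [AddCommGroup M] [Module B M] [Module A M] [IsScalarTower B A M]

/-- The action of `a : A` on `M` as a `B`-linear map. -/
noncomputable def aSmul (a : A) : M →ₗ[B] M where
  toFun m := a • m
  map_add' := smul_add a
  map_smul' b m := smul_comm a b m

/-- The action map `A ⊗_B M → M`, `a ⊗ m ↦ a • m`. -/
noncomputable def actionMapL : A ⊗[B] M →ₗ[B] M :=
  actionMap B A M ∘ₗ (TensorProduct.comm B A M).toLinearMap

/-- `g_3 ∘ g_1` for `g : A ⊗_B M → M ⊗_B A`, where `g_1` applies the identity in the first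
tensor position and `g` to the remaining two, and `g_3` applies the identity in the last
tensor position and `g` to the remaining two. -/
noncomputable def g31 (g : A ⊗[B] M →ₗ[B] M ⊗[B] A) :
    A ⊗[B] (A ⊗[B] M) →ₗ[B] (M ⊗[B] A) ⊗[B] A :=
  LinearMap.rTensor A g ∘ₗ (TensorProduct.assoc B A M A).symm.toLinearMap ∘ₗ
    LinearMap.lTensor A g

/-- `g_2` for `g : A ⊗_B M → M ⊗_B A`: the identity is applied in the middle tensor
position (which stays in the middle) and `g` is applied to the outer two positions,
with the outputs rearranged accordingly: `a ⊗ b ⊗ m ↦ Σ m' ⊗ b ⊗ a'` where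
`g(a ⊗ m) = Σ m' ⊗ a'`. -/
noncomputable def g2 (g : A ⊗[B] M →ₗ[B] M ⊗[B] A) :
    A ⊗[B] (A ⊗[B] M) →ₗ[B] (M ⊗[B] A) ⊗[B] A :=
  (TensorProduct.assoc B M A A).symm.toLinearMap ∘ₗ
    LinearMap.lTensor M (TensorProduct.comm B A A).toLinearMap ∘ₗ
    (TensorProduct.assoc B M A A).toLinearMap ∘ₗ
    LinearMap.rTensor A g ∘ₗ
    (TensorProduct.assoc B A M A).symm.toLinearMap ∘ₗ
    LinearMap.lTensor A (TensorProduct.comm B A M).toLinearMap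

/-- `g : A ⊗_B M → M ⊗_B A` is a descent datum: it is `A ⊗_B A`-linear, satisfies the
cocycle condition `g_2 = g_3 ∘ g_1`, and the normalization `μ_M (g (1 ⊗ m)) = m`. -/
noncomputable def IsDescentDatum (g : A ⊗[B] M →ₗ[B] M ⊗[B] A) : Prop :=
  (∀ (a b x : A) (m : M),
      g ((a * x) ⊗ₜ[B] (b • m)) =
        TensorProduct.map (aSmul B A M a) (LinearMap.mulLeft B b) (g (x ⊗ₜ[B] m))) ∧
  (g2 B A M g = g31 B A M g) ∧
  (∀ m : M, actionMap B A M (g ((1 : A) ⊗ₜ[B] m)) = m)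

/-- The descent datum associated to a coaction `ρ`: `g(a ⊗ m) = Σ m_0 · a ⊗ m_1`. -/
noncomputable def gOf (ρ : M →ₗ[B] M ⊗[B] A) : A ⊗[B] M →ₗ[B] M ⊗[B] A :=
  LinearMap.rTensor A (actionMapL B A M) ∘ₗ
    (TensorProduct.assoc B A M A).symm.toLinearMap ∘ₗ LinearMap.lTensor A ρ

/-- The coaction associated to a descent datum `g`: `ρ(m) = g(1 ⊗ m)`. -/
noncomputable def rhoOf (g : A ⊗[B] M →ₗ[B] M ⊗[B] A) : M →ₗ[B] M ⊗[B] A :=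
  g ∘ₗ TensorProduct.mk B A M 1

/-!
Write `Φ a b` for the endomorphism `m ⊗ c ↦ a • m ⊗ b * c` of `M ⊗ A`. For an `A`-linear `ρ` with
associated `g`, both sides of the cocycle condition at `a ⊗ b ⊗ m` are the images under
`Φ a b ⊗ id` of the two sides of coassociativity at `m`: the left one of `∑ m₀ ⊗ 1 ⊗ m₁` and the
right one of `∑ ρ(m₀) ⊗ m₁`. As `Φ 1 1 = id`, the two conditions are equivalent, so `ρ` is a
comodule structure if and only if `g` is a descent datum.
-/

section CocycleMaps

variable {B A}
variable {N : Type u} [AddCommGroup N] [Module B N] (g : A ⊗[B] N →ₗ[B] N ⊗[B] A)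

theorem rhoOf_apply (n : N) : rhoOf B A N g n = g (1 ⊗ₜ[B] n) :=
  rfl

theorem g2_tmul (a b : A) (n : N) :
    g2 B A N g (a ⊗ₜ[B] (b ⊗ₜ[B] n)) =
      LinearMap.rTensor A ((TensorProduct.mk B N A).flip b) (g (a ⊗ₜ[B] n)) := by
  have insert_middle : (TensorProduct.assoc B N A A).symm.toLinearMap ∘ₗ
      LinearMap.lTensor N (TensorProduct.comm B A A).toLinearMap ∘ₗ
      (TensorProduct.assoc B N A A).toLinearMap ∘ₗ (TensorProduct.mk B (N ⊗[B] A) A).flip b =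
      LinearMap.rTensor A ((TensorProduct.mk B N A).flip b) :=
    TensorProduct.ext' fun _ _ => rfl
  exact LinearMap.congr_fun insert_middle (g (a ⊗ₜ[B] n))

theorem g31_tmul (a b : A) (n : N) :
    g31 B A N g (a ⊗ₜ[B] (b ⊗ₜ[B] n)) =
      LinearMap.rTensor A (g ∘ₗ TensorProduct.mk B A N a) (g (b ⊗ₜ[B] n)) := by
  have apply_left : LinearMap.rTensor A g ∘ₗ (TensorProduct.assoc B A N A).symm.toLinearMap ∘ₗ
      TensorProduct.mk B A (N ⊗[B] A) a =
      LinearMap.rTensor A (g ∘ₗ TensorProduct.mk B A N a) :=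
    TensorProduct.ext' fun _ _ => rfl
  exact LinearMap.congr_fun apply_left (g (b ⊗ₜ[B] n))

end CocycleMaps

section Coaction

variable {B A M}

theorem aSmul_one : aSmul B A M 1 = LinearMap.id :=
  LinearMap.ext fun m => one_smul A m

theorem aSmul_mul (a b : A) : aSmul B A M (a * b) = aSmul B A M a ∘ₗ aSmul B A M b :=
  LinearMap.ext fun m => mul_smul a b m

variable (ρ : M →ₗ[B] M ⊗[B] A)

theorem gOf_tmul (a : A) (m : M) :
    gOf B A M ρ (a ⊗ₜ[B] m) = LinearMap.rTensor A (aSmul B A M a) (ρ m) := by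
  have act_left : LinearMap.rTensor A (actionMapL B A M) ∘ₗ
      (TensorProduct.assoc B A M A).symm.toLinearMap ∘ₗ TensorProduct.mk B A (M ⊗[B] A) a =
      LinearMap.rTensor A (aSmul B A M a) :=
    TensorProduct.ext' fun _ _ => rfl
  exact LinearMap.congr_fun act_left (ρ m)

theorem gOf_one_tmul (m : M) : gOf B A M ρ (1 ⊗ₜ[B] m) = ρ m := by
  rw [gOf_tmul, aSmul_one, LinearMap.rTensor_id_apply]

theorem rhoOf_gOf : rhoOf B A M (gOf B A M ρ) = ρ :=
  LinearMap.ext (gOf_one_tmul ρ)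

theorem gOf_rhoOf {g : A ⊗[B] M →ₗ[B] M ⊗[B] A}
    (hg : ∀ (a : A) (m : M),
      g (a ⊗ₜ[B] m) = LinearMap.rTensor A (aSmul B A M a) (g (1 ⊗ₜ[B] m))) :
    gOf B A M (rhoOf B A M g) = g :=
  TensorProduct.ext' fun a m => by rw [gOf_tmul, rhoOf_apply, ← hg]

theorem g2_gOf_tmul (a b : A) (m : M) :
    g2 B A M (gOf B A M ρ) (a ⊗ₜ[B] (b ⊗ₜ[B] m)) =
      LinearMap.rTensor A (TensorProduct.map (aSmul B A M a) (LinearMap.mulLeft B b))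
        (LinearMap.rTensor A (unitMap B A M) (ρ m)) := by
  have insert_smul : (TensorProduct.mk B M A).flip b ∘ₗ aSmul B A M a =
      TensorProduct.map (aSmul B A M a) (LinearMap.mulLeft B b) ∘ₗ unitMap B A M := by
    ext n
    simp [unitMap]
  rw [g2_tmul, gOf_tmul, ← LinearMap.rTensor_comp_apply, ← LinearMap.rTensor_comp_apply,
    insert_smul]

variable {ρ}

theorem gOf_tmul_smul
    (hρ : ∀ (a : A) (m : M), ρ (a • m) = LinearMap.lTensor M (LinearMap.mulLeft B a) (ρ m))
    (a b : A) (m : M) :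
    gOf B A M ρ (a ⊗ₜ[B] (b • m)) =
      TensorProduct.map (aSmul B A M a) (LinearMap.mulLeft B b) (ρ m) := by
  rw [gOf_tmul, hρ, ← LinearMap.comp_apply, LinearMap.rTensor_comp_lTensor]

theorem gOf_mul_tmul_smul
    (hρ : ∀ (a : A) (m : M), ρ (a • m) = LinearMap.lTensor M (LinearMap.mulLeft B a) (ρ m))
    (a b x : A) (m : M) :
    gOf B A M ρ ((a * x) ⊗ₜ[B] (b • m)) =
      TensorProduct.map (aSmul B A M a) (LinearMap.mulLeft B b) (gOf B A M ρ (x ⊗ₜ[B] m)) := by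
  rw [gOf_tmul_smul hρ, gOf_tmul, aSmul_mul, LinearMap.map_rTensor]

theorem g31_gOf_tmul
    (hρ : ∀ (a : A) (m : M), ρ (a • m) = LinearMap.lTensor M (LinearMap.mulLeft B a) (ρ m))
    (a b : A) (m : M) :
    g31 B A M (gOf B A M ρ) (a ⊗ₜ[B] (b ⊗ₜ[B] m)) =
      LinearMap.rTensor A (TensorProduct.map (aSmul B A M a) (LinearMap.mulLeft B b))
        (LinearMap.rTensor A ρ (ρ m)) := by
  have gOf_comp_smul : (gOf B A M ρ ∘ₗ TensorProduct.mk B A M a) ∘ₗ aSmul B A M b =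
      TensorProduct.map (aSmul B A M a) (LinearMap.mulLeft B b) ∘ₗ ρ :=
    LinearMap.ext fun n => gOf_tmul_smul hρ a b n
  rw [g31_tmul, gOf_tmul, ← LinearMap.rTensor_comp_apply, ← LinearMap.rTensor_comp_apply,
    gOf_comp_smul]

theorem gOf_mul_tmul_smul_iff :
    (∀ (a b x : A) (m : M), gOf B A M ρ ((a * x) ⊗ₜ[B] (b • m)) =
        TensorProduct.map (aSmul B A M a) (LinearMap.mulLeft B b) (gOf B A M ρ (x ⊗ₜ[B] m))) ↔
      ∀ (a : A) (m : M), ρ (a • m) = LinearMap.lTensor M (LinearMap.mulLeft B a) (ρ m) := by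
  refine ⟨fun hg b m => ?_, gOf_mul_tmul_smul⟩
  have at_one := hg 1 b 1 m
  rwa [mul_one, gOf_one_tmul, gOf_one_tmul, aSmul_one] at at_one

theorem g2_gOf_eq_g31_gOf_iff
    (hρ : ∀ (a : A) (m : M), ρ (a • m) = LinearMap.lTensor M (LinearMap.mulLeft B a) (ρ m)) :
    g2 B A M (gOf B A M ρ) = g31 B A M (gOf B A M ρ) ↔
      ∀ m : M, LinearMap.rTensor A ρ (ρ m) = LinearMap.rTensor A (unitMap B A M) (ρ m) := by
  constructor
  · intro cocycle m
    have at_one := LinearMap.congr_fun cocycle (1 ⊗ₜ[B] (1 ⊗ₜ[B] m))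
    rw [g2_gOf_tmul, g31_gOf_tmul hρ, aSmul_one, LinearMap.mulLeft_one, TensorProduct.map_id,
      LinearMap.rTensor_id_apply, LinearMap.rTensor_id_apply] at at_one
    exact at_one.symm
  · intro coassoc
    ext a b m
    change g2 B A M (gOf B A M ρ) (a ⊗ₜ[B] (b ⊗ₜ[B] m)) =
      g31 B A M (gOf B A M ρ) (a ⊗ₜ[B] (b ⊗ₜ[B] m))
    rw [g2_gOf_tmul, g31_gOf_tmul hρ, coassoc]

theorem isDescentDatum_gOf_iff :
    IsDescentDatum B A M (gOf B A M ρ) ↔ IsCanComodule B A M ρ := by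
  simp only [IsDescentDatum, IsCanComodule, gOf_mul_tmul_smul_iff, gOf_one_tmul]
  exact and_congr_right fun hρ => and_congr_left' (g2_gOf_eq_g31_gOf_iff hρ)

theorem IsDescentDatum.gOf_rhoOf {g : A ⊗[B] M →ₗ[B] M ⊗[B] A}
    (hg : IsDescentDatum B A M g) : gOf B A M (rhoOf B A M g) = g := by
  refine _root_.gOf_rhoOf fun a m => ?_
  have left_linear := hg.1 a 1 1 m
  rwa [mul_one, one_smul, LinearMap.mulLeft_one] at left_linear

end Coaction

/-- The assignments `ρ ↦ g` and `g ↦ ρ` are mutually inverse bijections between the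
coactions making `M` a comodule over the canonical coring and the descent data on `M`. -/
theorem comodule_equiv_descentData :
    (∀ ρ : M →ₗ[B] M ⊗[B] A, IsCanComodule B A M ρ → IsDescentDatum B A M (gOf B A M ρ)) ∧
    (∀ g : A ⊗[B] M →ₗ[B] M ⊗[B] A,
        IsDescentDatum B A M g → IsCanComodule B A M (rhoOf B A M g)) ∧
    (∀ ρ : M →ₗ[B] M ⊗[B] A, IsCanComodule B A M ρ → rhoOf B A M (gOf B A M ρ) = ρ) ∧
    (∀ g : A ⊗[B] M →ₗ[B] M ⊗[B] A,
        IsDescentDatum B A M g → gOf B A M (rhoOf B A M g) = g) := by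
  refine ⟨fun _ hρ => isDescentDatum_gOf_iff.2 hρ, fun g hg => ?_, fun ρ _ => rhoOf_gOf ρ,
    fun _ hg => hg.gOf_rhoOf⟩
  apply isDescentDatum_gOf_iff.1
  rwa [hg.gOf_rhoOf]

end DescentData
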